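/- Let n ≥ 2 and let G be the graph obtained by attaching a 4-cycle to the n-joined tri-pan T(n) at an arbitrary edge of T(n). Then the edge polytope 𝒫_G is type II decomposable but not type I decomposable. -/

import Mathlib

/-- For an edge `e = {i,j}` of a graph on `[d]`, `rho e = 𝐞ᵢ + 𝐞ⱼ ∈ ℝ^d`. -/
noncomputable def rho {d : ℕ} (e : Sym2 (Fin d)) : Fin d → ℝ :=
  Sym2.lift ⟨fun i j => Pi.single i 1 + Pi.single j 1, fun _ _ => add_comm _ _⟩ e

/-- The edge polytope of a graph `G` on `[d]`: the convex hull of `{ρ(e) : e ∈ E(G)}`. -/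
noncomputable def edgePolytope {d : ℕ} (G : SimpleGraph (Fin d)) : Set (Fin d → ℝ) :=
  convexHull ℝ (rho '' G.edgeSet)

/-- A set is integral if all its extreme points have integer coordinates. -/
def IsIntegralSet {d : ℕ} (Q : Set (Fin d → ℝ)) : Prop :=
  ∀ x ∈ Q.extremePoints ℝ, ∀ i, ∃ n : ℤ, x i = (n : ℝ)

/-- The hyperplane `{x : ∑ aᵢxᵢ = c}` is a separating hyperplane of `𝒫_G`: it meets
`𝒫_G \ ∂𝒫_G` (the intrinsic interior), and both closed half-space slices are integral. -/
def IsSepHyperplane {d : ℕ} (G : SimpleGraph (Fin d)) (a : Fin d → ℝ) (c : ℝ) : Prop :=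
  a ≠ 0 ∧
  (∃ x ∈ intrinsicInterior ℝ (edgePolytope G), ∑ i, a i * x i = c) ∧
  IsIntegralSet (edgePolytope G ∩ {x | c ≤ ∑ i, a i * x i}) ∧
  IsIntegralSet (edgePolytope G ∩ {x | ∑ i, a i * x i ≤ c})

/-- `𝒫_G` is decomposable if it has a separating hyperplane. -/
def Decomposable {d : ℕ} (G : SimpleGraph (Fin d)) : Prop :=
  ∃ a c, IsSepHyperplane G a c

/-- Type I decomposability: a separating hyperplane through `0` with all `aᵢ ∈ {1,-1}`. -/
def TypeIDecomposable {d : ℕ} (G : SimpleGraph (Fin d)) : Prop :=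
  ∃ a : Fin d → ℝ, (∀ i, a i = 1 ∨ a i = -1) ∧ IsSepHyperplane G a 0

/-- Type II decomposability: a separating hyperplane through `0` with all `aᵢ ∈ {0,1,-1}`,
some `aᵢ = 0`, and no edge with signature `{1,1}` or `{-1,-1}`. -/
def TypeIIDecomposable {d : ℕ} (G : SimpleGraph (Fin d)) : Prop :=
  ∃ a : Fin d → ℝ, (∀ i, a i = 0 ∨ a i = 1 ∨ a i = -1) ∧ (∃ i, a i = 0) ∧
    (∀ i j, G.Adj i j → ¬(a i = 1 ∧ a j = 1) ∧ ¬(a i = -1 ∧ a j = -1)) ∧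
    IsSepHyperplane G a 0

/-- Attaching a 4-cycle to `G` at the edge `{i,j}`: add two new vertices `x₁ = d`, `x₂ = d+1`
and the three edges `{i,x₁}`, `{x₁,x₂}`, `{x₂,j}`. -/
def attachFourCycle {d : ℕ} (G : SimpleGraph (Fin d)) (i j : Fin d) :
    SimpleGraph (Fin (d + 2)) :=
  SimpleGraph.fromEdgeSet
    ((Sym2.map (Fin.castLE (by omega : d ≤ d + 2))) '' G.edgeSet ∪
      {s(Fin.castLE (by omega) i, (⟨d, by omega⟩ : Fin (d + 2))),
       s((⟨d, by omega⟩ : Fin (d + 2)), (⟨d + 1, by omega⟩ : Fin (d + 2))),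
       s((⟨d + 1, by omega⟩ : Fin (d + 2)), Fin.castLE (by omega) j)})

/-- The `n`-joined tri-pan `T(n)` on the `2n+2` vertices
`x = 0`, `vₖ = k` (`1 ≤ k ≤ n`), `yₖ = n+1+k` (`0 ≤ k ≤ n`), with edges
`{x,vₖ}`, `{vₖ,y_{k-1}}`, `{vₖ,yₖ}`, `{y_{k-1},yₖ}` for `1 ≤ k ≤ n`. -/
def triPan (n : ℕ) : SimpleGraph (Fin (2 * n + 2)) :=
  SimpleGraph.fromEdgeSet
    { e | ∃ k : ℕ, ∃ _h1 : 1 ≤ k, ∃ _h2 : k ≤ n,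
        e = s((⟨0, by omega⟩ : Fin (2 * n + 2)), ⟨k, by omega⟩) ∨
        e = s((⟨k, by omega⟩ : Fin (2 * n + 2)), ⟨n + k, by omega⟩) ∨
        e = s((⟨k, by omega⟩ : Fin (2 * n + 2)), ⟨n + 1 + k, by omega⟩) ∨
        e = s((⟨n + k, by omega⟩ : Fin (2 * n + 2)), ⟨n + 1 + k, by omega⟩) }

/-!
Type II. In the attached 4-cycle `i, x₁, x₂, j` the functional `x₁ - x₂` is positive on the edge
`{i, x₁}` only, negative on `{x₂, j}` only, and zero on all other edges of the graph. As
`ρ(i, x₁) + ρ(x₂, j) = ρ(x₁, x₂) + ρ(i, j)`, the segment between the two exceptional vertices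
crosses the hyperplane inside the hull of the remaining vertices, so cutting creates no new vertex.

Type I. By Ohsugi and Hibi, the segment joining `ρ(e)` and `ρ(f)` is a face of the edge polytope
unless `e` and `f` are opposite sides of a 4-cycle or share an endpoint. A separating hyperplane
cannot cut such a face in its interior, because the intersection point would be a nonintegral vertex
of a slice. Hence the signs of a type I hyperplane colour the vertices so that every positive edge
is opposite to every negative edge, and edges of both signs occur. In `T(n)` all edges between two
triangles pass through their common vertex, so edges of different triangles are never opposite and
all triangles have the same majority sign. This leaves no edge of the other sign: neither in `T(n)`,
nor, for `n ≥ 2`, in the attached 4-cycle, because only `{i, j}` is opposite to `{x₁, x₂}` and the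
triangles provide a second edge of majority sign, a contradiction.
-/

section ConvexHull

variable {𝕜 E : Type*} [Field 𝕜] [LinearOrder 𝕜] [IsStrictOrderedRing 𝕜] [AddCommGroup E]
  [Module 𝕜 E] {s : Set E} {f : E →ₗ[𝕜] 𝕜} {c : 𝕜} {p q r : E}

theorem mem_convexHull_sep_of_map_eq (hf : ∀ x ∈ s, c ≤ f x) {x : E} (hx : x ∈ convexHull 𝕜 s)
    (hfx : f x = c) : x ∈ convexHull 𝕜 {y ∈ s | f y = c} := by
  suffices hsub :
      convexHull 𝕜 s ⊆ {y | c ≤ f y ∧ (f y = c → y ∈ convexHull 𝕜 {y ∈ s | f y = c})} from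
    (hsub hx).2 hfx
  refine convexHull_min (fun y hy ↦ ⟨hf y hy, fun h ↦ subset_convexHull 𝕜 _ ⟨hy, h⟩⟩) ?_
  rw [convex_iff_forall_pos]
  rintro y ⟨hy, hy'⟩ z ⟨hz, hz'⟩ a b ha hb hab
  have hc : c = a * c + b * c := by rw [← add_mul, hab, one_mul]
  have hay := mul_le_mul_of_nonneg_left hy ha.le
  have hbz := mul_le_mul_of_nonneg_left hz hb.le
  simp only [Set.mem_ofPred_eq, map_add, map_smul, smul_eq_mul]
  refine ⟨hc.le.trans (add_le_add hay hbz), fun h ↦ ?_⟩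
  have hfy : f y = c := mul_left_cancel₀ ha.ne' (by linarith)
  have hfz : f z = c := mul_left_cancel₀ hb.ne' (by linarith)
  exact convex_convexHull 𝕜 _ (hy' hfy) (hz' hfz) ha.le hb.le hab

theorem map_eq_of_mem_openSegment {x y z : E} (hy : c ≤ f y) (hz : c ≤ f z)
    (hx : x ∈ openSegment 𝕜 y z) (hfx : f x = c) : f y = c := by
  obtain ⟨a, b, ha, hb, hab, rfl⟩ := hx
  simp only [map_add, map_smul, smul_eq_mul] at hfx
  have hc : c = a * c + b * c := by rw [← add_mul, hab, one_mul]
  have hbz := mul_le_mul_of_nonneg_left hz hb.le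
  exact hy.antisymm' (le_of_mul_le_mul_left (by linarith) ha)

theorem map_eq_of_mem_convexHull (hf : ∀ x ∈ s, f x = c) {x : E} (hx : x ∈ convexHull 𝕜 s) :
    f x = c :=
  convexHull_min hf (convex_hyperplane f.isLinear c) hx

theorem le_map_of_mem_convexHull (hf : ∀ x ∈ s, c ≤ f x) {x : E} (hx : x ∈ convexHull 𝕜 s) :
    c ≤ f x :=
  convexHull_min hf (convex_halfSpace_ge f.isLinear c) hx

theorem isExtreme_convexHull_sep_map_eq (hf : ∀ x ∈ s, c ≤ f x) :
    IsExtreme 𝕜 (convexHull 𝕜 s) (convexHull 𝕜 {x ∈ s | f x = c}) where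
  subset := convexHull_mono (Set.sep_subset _ _)
  left_mem_of_mem_openSegment _ hy _ hz _ hx hxyz :=
    mem_convexHull_sep_of_map_eq hf hy <| map_eq_of_mem_openSegment
      (le_map_of_mem_convexHull hf hy) (le_map_of_mem_convexHull hf hz) hxyz
      (map_eq_of_mem_convexHull (fun _ h ↦ h.2) hx)

theorem injOn_segment_of_map_ne (hpq : f p ≠ f q) : Set.InjOn f (segment 𝕜 p q) := by
  rw [segment_eq_image_lineMap]
  rintro _ ⟨a, -, rfl⟩ _ ⟨b, -, rfl⟩ hab
  have himage (t : 𝕜) : f (AffineMap.lineMap p q t) = AffineMap.lineMap (f p) (f q) t := by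
    simp [AffineMap.lineMap_apply]
  rw [himage, himage] at hab
  rw [AffineMap.lineMap_injective 𝕜 hpq hab]

theorem mem_extremePoints_inter_halfSpace {A : Set E} (hface : IsExtreme 𝕜 A (segment 𝕜 p q))
    (hpq : f p ≠ f q) (hr : r ∈ segment 𝕜 p q) (hfr : f r = c) :
    r ∈ (A ∩ {x | c ≤ f x}).extremePoints 𝕜 := by
  refine mem_extremePoints_iff_left.2 ⟨⟨hface.subset hr, hfr.ge⟩, ?_⟩
  rintro y ⟨hy, hfy⟩ z ⟨hz, hfz⟩ hyz
  exact injOn_segment_of_map_ne hpq (hface.left_mem_of_mem_openSegment hy hz hr hyz) hr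
    ((map_eq_of_mem_openSegment hfy hfz hyz hfr).trans hfr.symm)

theorem convexHull_insert_insert_inter_halfSpace_subset (hs : ∀ x ∈ s, f x = c)
    (hp : c < f p) (hr : r ∈ openSegment 𝕜 p q) (hrs : r ∈ convexHull 𝕜 s) :
    convexHull 𝕜 (insert q (insert p s)) ∩ {x | c ≤ f x} ⊆ convexHull 𝕜 (insert p s) := by
  rintro x ⟨hx, hfx⟩
  rw [convexHull_insert (Set.insert_nonempty _ _),
    convexHull_insert (convexHull_nonempty_iff.1 ⟨r, hrs⟩)] at hx
  simp only [mem_convexJoin, Set.mem_singleton_iff, exists_eq_left] at hx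
  obtain ⟨_, ⟨z, hz, β, γ, -, hγ, hβγ, rfl⟩, α, δ, hα, hδ, hαδ, rfl⟩ := hx
  have hfr : f r = c := map_eq_of_mem_convexHull hs hrs
  have hfz : f z = c := map_eq_of_mem_convexHull hs hz
  obtain ⟨a, b, -, hb, hab, rfl⟩ := hr
  simp only [map_add, map_smul, smul_eq_mul, Set.mem_ofPred_eq, hfz] at hfx hfr
  -- `q` is on the line through `p` and `r`, so it can be traded for `p` and `r`; the hypothesis
  -- `c ≤ f x` says exactly that the coefficient left on `p` is nonnegative.
  have hcoeff : 0 ≤ δ * β - α / b * a := by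
    have hq : f q - c = - (a / b) * (f p - c) := by
      field_simp
      linear_combination hfr - c * hab
    have hmul : 0 ≤ (δ * β - α / b * a) * (f p - c) := by
      calc (0 : 𝕜) ≤ α * (f q - c) + δ * β * (f p - c) := by
            linear_combination hfx + c * (hαδ + δ * hβγ)
        _ = (δ * β - α / b * a) * (f p - c) := by rw [hq]; ring
    exact nonneg_of_mul_nonneg_left hmul (sub_pos.2 hp)
  have hdecomp : α • q + δ • (β • p + γ • z) =
      ∑ m : Fin 3, ![δ * β - α / b * a, α / b, δ * γ] m • ![p, a • p + b • q, z] m := by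
    simp only [Fin.sum_univ_three, Matrix.cons_val]
    match_scalars <;> field_simp
    ring
  rw [hdecomp]
  have hsub : convexHull 𝕜 s ⊆ convexHull 𝕜 (insert p s) :=
    convexHull_mono (Set.subset_insert _ _)
  refine (convex_convexHull 𝕜 (insert p s)).sum_mem ?_ ?_ ?_
  · simp [Fin.forall_fin_succ, hcoeff, div_nonneg hα hb.le, mul_nonneg hδ hγ]
  · simp only [Fin.sum_univ_three, Matrix.cons_val]
    field_simp
    linear_combination b * (hαδ + δ * hβγ) - α * hab
  · simp [Fin.forall_fin_succ, hsub hrs, hsub hz,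
      subset_convexHull 𝕜 _ (Set.mem_insert p s)]

theorem convexHull_insert_insert_inter_halfSpace (hs : ∀ x ∈ s, f x = c) (hp : c < f p)
    (hr : r ∈ openSegment 𝕜 p q) (hrs : r ∈ convexHull 𝕜 s) :
    convexHull 𝕜 (insert q (insert p s)) ∩ {x | c ≤ f x} = convexHull 𝕜 (insert p s) :=
  (convexHull_insert_insert_inter_halfSpace_subset hs hp hr hrs).antisymm <|
    Set.subset_inter (convexHull_mono (Set.subset_insert _ _)) fun _ hx ↦
      le_map_of_mem_convexHull
        (Set.forall_mem_insert.2 ⟨hp.le, fun y hy ↦ (hs y hy).ge⟩) hx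

end ConvexHull

section IntrinsicInterior

open AffineMap

theorem exists_lineMap_mem_of_mem_intrinsicInterior {V P : Type*} [AddCommGroup V] [Module ℝ V]
    [TopologicalSpace V] [ContinuousSMul ℝ V] [TopologicalSpace P] [AddTorsor V P]
    [IsTopologicalAddTorsor P] {s : Set P} {x p : P} (hx : x ∈ intrinsicInterior ℝ s)
    (hp : p ∈ s) : ∃ t : ℝ, 1 < t ∧ lineMap p x t ∈ s := by
  obtain ⟨x, hx, rfl⟩ := hx
  have : Nonempty s := ⟨p, hp⟩
  let p' : affineSpan ℝ s := ⟨p, subset_affineSpan ℝ s hp⟩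
  have hline : Continuous (lineMap p' x : ℝ → affineSpan ℝ s) := lineMap_continuous
  have hnhds : ∀ᶠ t in nhds (1 : ℝ), lineMap p' x t ∈ ((↑) ⁻¹' s : Set (affineSpan ℝ s)) :=
    hline.continuousAt.eventually_mem <| by
      rw [lineMap_apply_one]; exact mem_interior_iff_mem_nhds.1 hx
  obtain ⟨t, ht, ht1⟩ :=
    ((hnhds.filter_mono nhdsWithin_le_nhds).and (self_mem_nhdsWithin (s := Set.Ioi (1 : ℝ)))).exists
  exact ⟨t, ht1, ht⟩

theorem lineMap_mem_intrinsicInterior {E : Type*} [AddCommGroup E] [Module ℝ E]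
    [TopologicalSpace E] [IsTopologicalAddGroup E] [ContinuousSMul ℝ E] {s : Set E}
    (hs : Convex ℝ s) {x p : E} (hx : x ∈ intrinsicInterior ℝ s) (hp : p ∈ s) {t : ℝ}
    (ht₀ : 0 < t) (ht₁ : t ≤ 1) : lineMap p x t ∈ intrinsicInterior ℝ s := by
  obtain ⟨x, hx, rfl⟩ := hx
  have : Nonempty s := ⟨p, hp⟩
  let p' : affineSpan ℝ s := ⟨p, subset_affineSpan ℝ s hp⟩
  refine ⟨homothety p' t x, ?_, rfl⟩
  refine interior_maximal ?_ (homothety_isOpenMap p' t ht₀.ne' _ isOpen_interior)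
    (Set.mem_image_of_mem _ hx)
  rintro _ ⟨y, hy, rfl⟩
  have hys : (y : E) ∈ s := interior_subset (s := ((↑) ⁻¹' s : Set (affineSpan ℝ s))) hy
  exact hs.lineMap_mem hp hys ⟨ht₀.le, ht₁⟩

theorem exists_map_lt_of_mem_intrinsicInterior {E : Type*} [AddCommGroup E] [Module ℝ E]
    [TopologicalSpace E] [IsTopologicalAddGroup E] [ContinuousSMul ℝ E] {s : Set E}
    {f : E →ₗ[ℝ] ℝ} {x p : E} (hx : x ∈ intrinsicInterior ℝ s) (hp : p ∈ s) (hxp : f x < f p) :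
    ∃ q ∈ s, f q < f x := by
  obtain ⟨t, ht, hq⟩ := exists_lineMap_mem_of_mem_intrinsicInterior hx hp
  refine ⟨_, hq, ?_⟩
  have hfq : f (lineMap p x t) = f x - (t - 1) * (f p - f x) := by
    simp only [lineMap_apply, vsub_eq_sub, vadd_eq_add, map_add, map_smul, map_sub, smul_eq_mul]
    ring
  rw [hfq]
  exact sub_lt_self _ (mul_pos (sub_pos.2 ht) (sub_pos.2 hxp))

theorem exists_mem_intrinsicInterior_map_eq {E : Type*} [NormedAddCommGroup E] [NormedSpace ℝ E]
    [FiniteDimensional ℝ E] {s : Set E} (hs : Convex ℝ s) {f : E →ₗ[ℝ] ℝ} {c : ℝ} {p q : E}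
    (hp : p ∈ s) (hq : q ∈ s) (hpc : f p < c) (hcq : c < f q) :
    ∃ x ∈ intrinsicInterior ℝ s, f x = c := by
  obtain ⟨z, hz⟩ := Set.Nonempty.intrinsicInterior hs ⟨p, hp⟩
  have key {g : E →ₗ[ℝ] ℝ} {b : ℝ} {w : E} (hw : w ∈ s) (hwb : g w < b) (hbz : b ≤ g z) :
      ∃ x ∈ intrinsicInterior ℝ s, g x = b := by
    have hpos : 0 < g z - g w := sub_pos.2 (hwb.trans_le hbz)
    refine ⟨lineMap w z ((b - g w) / (g z - g w)), lineMap_mem_intrinsicInterior hs hz hw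
      (div_pos (sub_pos.2 hwb) hpos) ((div_le_one hpos).2 (sub_le_sub_right hbz _)), ?_⟩
    simp only [lineMap_apply, vsub_eq_sub, vadd_eq_add, map_add, map_smul, map_sub, smul_eq_mul]
    field_simp
    ring
  rcases le_total c (f z) with hcz | hzc
  · exact key hp hpc hcz
  · obtain ⟨x, hx, hfx⟩ := key (g := -f) hq (neg_lt_neg hcq) (neg_le_neg hzc)
    exact ⟨x, hx, neg_injective hfx⟩

end IntrinsicInterior

section EdgePolytope

open Matrix

variable {d : ℕ} {G : SimpleGraph (Fin d)} {a : Fin d → ℝ} {c : ℝ} {u v s t : Fin d}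

theorem dotProduct_rho (a : Fin d → ℝ) (u v : Fin d) : a ⬝ᵥ rho s(u, v) = a u + a v := by
  simp [rho, dotProduct_add]

theorem isIntegralSet_convexHull_rho_image (T : Set (Sym2 (Fin d))) :
    IsIntegralSet (convexHull ℝ (rho '' T)) := by
  intro x hx i
  obtain ⟨e, -, rfl⟩ := extremePoints_convexHull_subset hx
  induction e with
  | _ u v =>
    refine ⟨(Pi.single u 1 + Pi.single v 1 : Fin d → ℤ) i, ?_⟩
    simp [rho, Pi.single_apply]

theorem rho_mem_edgePolytope {e : Sym2 (Fin d)} (he : e ∈ G.edgeSet) : rho e ∈ edgePolytope G :=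
  subset_convexHull ℝ _ (Set.mem_image_of_mem _ he)

theorem isSepHyperplane_of_edgeSet_eq {e f : Sym2 (Fin d)} {T : Set (Sym2 (Fin d))}
    (hE : G.edgeSet = insert e (insert f T)) (hT : ∀ g ∈ T, a ⬝ᵥ rho g = c)
    (he : c < a ⬝ᵥ rho e)
    (hr : (openSegment ℝ (rho e) (rho f) ∩ convexHull ℝ (rho '' T)).Nonempty) :
    IsSepHyperplane G a c := by
  obtain ⟨r, hr, hrT⟩ := hr
  replace hT : ∀ x ∈ rho '' T, dotProductBilin ℝ ℝ a x = c := Set.forall_mem_image.2 hT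
  have hf : a ⬝ᵥ rho f < c := by
    by_contra! hf
    exact he.ne' (map_eq_of_mem_openSegment (f := dotProductBilin ℝ ℝ a) he.le hf hr
      (map_eq_of_mem_convexHull hT hrT))
  have hupper : edgePolytope G ∩ {x | c ≤ a ⬝ᵥ x} = convexHull ℝ (rho '' insert e T) := by
    rw [edgePolytope, hE, Set.insert_comm]
    simp only [Set.image_insert_eq]
    exact convexHull_insert_insert_inter_halfSpace (f := dotProductBilin ℝ ℝ a) hT he hr hrT
  have hlower : edgePolytope G ∩ {x | a ⬝ᵥ x ≤ c} = convexHull ℝ (rho '' insert f T) := by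
    rw [openSegment_symm] at hr
    have hslice := convexHull_insert_insert_inter_halfSpace (f := -dotProductBilin ℝ ℝ a)
      (fun x hx ↦ congrArg Neg.neg (hT x hx)) (neg_lt_neg hf) hr hrT
    simpa only [edgePolytope, hE, Set.image_insert_eq, LinearMap.neg_apply, neg_le_neg_iff,
      dotProductBilin_apply_apply] using hslice
  refine ⟨?_, ?_, ?_, ?_⟩
  · rintro rfl
    rw [zero_dotProduct] at he hf
    exact he.not_gt hf
  · exact exists_mem_intrinsicInterior_map_eq (f := dotProductBilin ℝ ℝ a) (convex_convexHull ℝ _)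
      (rho_mem_edgePolytope (by simp [hE])) (rho_mem_edgePolytope (by simp [hE])) hf he
  · exact hupper ▸ isIntegralSet_convexHull_rho_image _
  · exact hlower ▸ isIntegralSet_convexHull_rho_image _

/-- The edges `{u, v}` and `{s, t}` are opposite sides of a 4-cycle of `G`. Edges that share an
endpoint satisfy this as well, the cycle then being degenerate. -/
def OppositeEdges {V : Type*} (G : SimpleGraph V) (u v s t : V) : Prop :=
  (G.Adj u s ∧ G.Adj v t) ∨ (G.Adj u t ∧ G.Adj v s)

theorem isExtreme_segment_rho_of_not_adj (huv : G.Adj u v) (hst : G.Adj s t)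
    (hvs : ¬G.Adj v s) (hvt : ¬G.Adj v t) :
    IsExtreme ℝ (edgePolytope G) (segment ℝ (rho s(u, v)) (rho s(s, t))) := by
  -- Only `v` has a negative weight, and its neighbours other than `u` have weight 2.
  let b : Fin d → ℝ := fun k ↦
    if k = v then -1 else if k = u then 1 else if k = s ∨ k = t then 0 else 2
  have hsu : s ≠ u := by rintro rfl; exact hvs huv.symm
  have htu : t ≠ u := by rintro rfl; exact hvt huv.symm
  have hsv : s ≠ v := by rintro rfl; exact hvt hst
  have htv : t ≠ v := by rintro rfl; exact hvs hst.symm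
  have hb : ∀ e ∈ G.edgeSet, 0 ≤ b ⬝ᵥ rho e ∧
      (b ⬝ᵥ rho e = 0 ↔ e = s(u, v) ∨ e = s(s, t)) := by
    intro e he
    induction e with
    | _ x y =>
      rw [SimpleGraph.mem_edgeSet] at he
      simp only [dotProduct_rho, Sym2.eq_iff, b]
      grind [SimpleGraph.Adj.symm, SimpleGraph.Adj.ne, huv.ne]
  have hface : {x ∈ rho '' G.edgeSet | b ⬝ᵥ x = 0} = {rho s(u, v), rho s(s, t)} := by
    ext x
    constructor
    · rintro ⟨⟨e, he, rfl⟩, hbe⟩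
      exact ((hb e he).2.1 hbe).imp (congrArg rho) (congrArg rho)
    · rintro (rfl | rfl)
      · exact ⟨⟨_, huv, rfl⟩, (hb _ huv).2.2 (Or.inl rfl)⟩
      · exact ⟨⟨_, hst, rfl⟩, (hb _ hst).2.2 (Or.inr rfl)⟩
  rw [← convexHull_pair, ← hface]
  exact isExtreme_convexHull_sep_map_eq (f := dotProductBilin ℝ ℝ b)
    (Set.forall_mem_image.2 fun e he ↦ (hb e he).1)

theorem isExtreme_segment_rho (huv : G.Adj u v) (hst : G.Adj s t)
    (h : ¬OppositeEdges G u v s t) :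
    IsExtreme ℝ (edgePolytope G) (segment ℝ (rho s(u, v)) (rho s(s, t))) := by
  obtain ⟨hus | hvt, hut | hvs⟩ : (¬G.Adj u s ∨ ¬G.Adj v t) ∧ (¬G.Adj u t ∨ ¬G.Adj v s) := by
    simpa only [OppositeEdges, not_or, not_and_or] using h
  · rw [Sym2.eq_swap (a := u)]
    exact isExtreme_segment_rho_of_not_adj huv.symm hst hus hut
  · rw [segment_symm, Sym2.eq_swap (a := s)]
    exact isExtreme_segment_rho_of_not_adj hst.symm huv (mt .symm hus) (mt .symm hvs)
  · rw [segment_symm]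
    exact isExtreme_segment_rho_of_not_adj hst huv (mt .symm hut) (mt .symm hvt)
  · exact isExtreme_segment_rho_of_not_adj huv hst hvs hvt

theorem IsSepHyperplane.oppositeEdges (h : IsSepHyperplane G a c) (huv : G.Adj u v)
    (hst : G.Adj s t) (hpos : c < a u + a v) (hneg : a s + a t < c) :
    OppositeEdges G u v s t := by
  by_contra hopp
  rw [← dotProduct_rho] at hpos hneg
  obtain ⟨r, ⟨α, β, hα, hβ, hαβ, hr⟩, hac⟩ :
      ∃ r ∈ openSegment ℝ (rho s(u, v)) (rho s(s, t)), a ⬝ᵥ r = c := by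
    change c ∈ (dotProductBilin ℝ ℝ a).toAffineMap '' _
    rw [image_openSegment, openSegment_symm]
    exact (openSegment_eq_Ioo (hneg.trans hpos)).ge ⟨hneg, hpos⟩
  have hextreme : r ∈ (edgePolytope G ∩ {x | c ≤ a ⬝ᵥ x}).extremePoints ℝ :=
    mem_extremePoints_inter_halfSpace (f := dotProductBilin ℝ ℝ a)
      (isExtreme_segment_rho huv hst hopp) (hneg.trans hpos).ne'
      ⟨α, β, hα.le, hβ.le, hαβ, hr⟩ hac
  have hus : s ≠ u := by rintro rfl; exact hopp (.inr ⟨hst, huv.symm⟩)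
  have hut : t ≠ u := by rintro rfl; exact hopp (.inl ⟨hst.symm, huv.symm⟩)
  obtain ⟨m, hm⟩ := h.2.2.1 r hextreme u
  have hru : r u = α := by
    simp [← hr, rho, huv.ne, hus.symm, hut.symm]
  have hm0 : (0 : ℝ) < m := by rwa [← hm, hru]
  have hm1 : (m : ℝ) < 1 := by rw [← hm, hru]; linarith
  norm_cast at hm0 hm1
  omega

theorem IsSepHyperplane.neg (h : IsSepHyperplane G a c) : IsSepHyperplane G (-a) (-c) := by
  obtain ⟨ha, ⟨x, hx, hxc⟩, hge, hle⟩ := h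
  refine ⟨neg_ne_zero.2 ha, ⟨x, hx, ?_⟩, ?_, ?_⟩
  all_goals simpa

theorem IsSepHyperplane.exists_adj_lt (h : IsSepHyperplane G a c) (huv : G.Adj u v)
    (hpos : c < a u + a v) : ∃ s t, G.Adj s t ∧ a s + a t < c := by
  obtain ⟨x, hx, rfl⟩ := h.2.1
  rw [← dotProduct_rho] at hpos
  by_contra! hge
  obtain ⟨q, hq, hqc⟩ := exists_map_lt_of_mem_intrinsicInterior (f := dotProductBilin ℝ ℝ a) hx
    (rho_mem_edgePolytope huv) hpos
  refine hqc.not_ge (le_map_of_mem_convexHull (Set.forall_mem_image.2 fun e he ↦ ?_) hq)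
  induction e with
  | _ s t => exact (hge s t he).trans_eq (dotProduct_rho a s t).symm

end EdgePolytope

section Colouring

variable {V W : Type*} {G : SimpleGraph V} {H : SimpleGraph W} {A : Set V}

/-- A two-colouring of the vertices, with colour classes `A` and `Aᶜ`, such that every edge inside
`A` is opposite to every edge inside `Aᶜ`. -/
def MonochromaticEdgesOpposite (G : SimpleGraph V) (A : Set V) : Prop :=
  ∀ ⦃u v s t⦄, u ∈ A → v ∈ A → s ∈ Aᶜ → t ∈ Aᶜ → G.Adj u v → G.Adj s t → OppositeEdges G u v s t

theorem OppositeEdges.symm {u v s t : V} (h : OppositeEdges G u v s t) :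
    OppositeEdges G s t u v :=
  h.imp (And.imp .symm .symm) fun h ↦ ⟨h.2.symm, h.1.symm⟩

theorem MonochromaticEdgesOpposite.compl (h : MonochromaticEdgesOpposite G A) :
    MonochromaticEdgesOpposite G Aᶜ :=
  fun _ _ _ _ hu hv hs ht huv hst ↦
    (h (Set.notMem_compl_iff.1 hs) (Set.notMem_compl_iff.1 ht) hu hv hst huv).symm

theorem MonochromaticEdgesOpposite.preimage {B : Set W} (h : MonochromaticEdgesOpposite H B)
    (φ : G ↪g H) : MonochromaticEdgesOpposite G (φ ⁻¹' B) := by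
  intro u v s t hu hv hs ht huv hst
  simpa only [OppositeEdges, φ.map_adj_iff] using
    h hu hv hs ht (φ.map_adj_iff.2 huv) (φ.map_adj_iff.2 hst)

theorem not_isIndepSet_iff : ¬G.IsIndepSet A ↔ ∃ u ∈ A, ∃ v ∈ A, G.Adj u v := by
  simp only [SimpleGraph.isIndepSet_iff, Set.Pairwise, not_forall, not_not]
  exact ⟨fun ⟨u, hu, v, hv, _, huv⟩ ↦ ⟨u, hu, v, hv, huv⟩,
    fun ⟨u, hu, v, hv, huv⟩ ↦ ⟨u, hu, v, hv, huv.ne, huv⟩⟩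

theorem IsSepHyperplane.not_isIndepSet_neg_one {d : ℕ} {G : SimpleGraph (Fin d)} {a : Fin d → ℝ}
    (h : IsSepHyperplane G a 0) (ha : ∀ k, a k = 1 ∨ a k = -1)
    (hpos : ¬G.IsIndepSet {k | a k = 1}) : ¬G.IsIndepSet {k | a k = -1} := by
  obtain ⟨u, hu, v, hv, huv⟩ := not_isIndepSet_iff.1 hpos
  obtain ⟨s, t, hst, hneg⟩ := h.exists_adj_lt huv <| by
    rw [Set.mem_ofPred.1 hu, Set.mem_ofPred.1 hv]; norm_num
  refine not_isIndepSet_iff.2 ⟨s, (ha s).resolve_left fun hs ↦ ?_, t, (ha t).resolve_left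
    fun ht ↦ ?_, hst⟩
  · rcases ha t with ht | ht <;> linarith
  · rcases ha s with hs | hs <;> linarith

theorem TypeIDecomposable.exists_monochromaticEdgesOpposite {d : ℕ} {G : SimpleGraph (Fin d)}
    (h : TypeIDecomposable G) :
    ∃ A, MonochromaticEdgesOpposite G A ∧ (G.IsIndepSet A ↔ G.IsIndepSet Aᶜ) := by
  obtain ⟨a, ha, hsep⟩ := h
  have hcompl : {k | a k = 1}ᶜ = {k | a k = -1} := by
    ext k
    refine ⟨(ha k).resolve_left, fun hk hk' ↦ ?_⟩
    have hone : (1 : ℝ) = -1 := hk'.symm.trans hk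
    norm_num at hone
  refine ⟨{k | a k = 1}, ?_, ?_⟩
  · intro u v s t hu hv hs ht huv hst
    rw [hcompl] at hs ht
    refine hsep.oppositeEdges huv hst ?_ ?_
    · rw [Set.mem_ofPred.1 hu, Set.mem_ofPred.1 hv]; norm_num
    · rw [Set.mem_ofPred.1 hs, Set.mem_ofPred.1 ht]; norm_num
  · rw [hcompl]
    refine ⟨fun h ↦ ?_, not_imp_not.1 (hsep.not_isIndepSet_neg_one ha)⟩
    have hneg : IsSepHyperplane G (-a) 0 := by simpa using hsep.neg
    have hind := mt <| hneg.not_isIndepSet_neg_one fun k ↦ by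
      simpa [neg_eq_iff_eq_neg] using (ha k).symm
    simpa [neg_eq_iff_eq_neg, h] using hind

end Colouring

section AttachFourCycle

namespace attachFourCycle

variable {d : ℕ}

/-- A vertex of `G`, viewed as a vertex of `attachFourCycle G i j`. -/
def old (u : Fin d) : Fin (d + 2) := Fin.castLE (by omega) u

/-- The new vertex of `attachFourCycle G i j` adjacent to `i`. -/
def x₁ (d : ℕ) : Fin (d + 2) := ⟨d, by omega⟩

/-- The new vertex of `attachFourCycle G i j` adjacent to `j`. -/
def x₂ (d : ℕ) : Fin (d + 2) := ⟨d + 1, by omega⟩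

theorem old_injective : Function.Injective (old (d := d)) :=
  Fin.castLE_injective (by omega)

theorem old_ne_x₁ (u : Fin d) : old u ≠ x₁ d := Fin.ne_of_lt u.2

theorem old_ne_x₂ (u : Fin d) : old u ≠ x₂ d := Fin.ne_of_lt (u.2.trans d.lt_succ_self)

theorem x₁_ne_x₂ : x₁ d ≠ x₂ d := Fin.ne_of_lt d.lt_succ_self

theorem eq_old_or_eq_x₁_or_eq_x₂ (w : Fin (d + 2)) : (∃ u, w = old u) ∨ w = x₁ d ∨ w = x₂ d := by
  rcases lt_or_ge (w : ℕ) d with hw | hw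
  · exact Or.inl ⟨⟨w, hw⟩, rfl⟩
  · refine Or.inr ?_
    simp only [Fin.ext_iff, x₁, x₂]
    omega

variable {G : SimpleGraph (Fin d)} {i j u v : Fin d}

theorem edgeSet_eq : (attachFourCycle G i j).edgeSet =
    insert s(old i, x₁ d) (insert s(x₂ d, old j)
      (insert s(x₁ d, x₂ d) (Sym2.map old '' G.edgeSet))) := by
  have hdiag : ∀ e ∈ Sym2.map old '' G.edgeSet, ¬e.IsDiag := by
    rintro _ ⟨e, he, rfl⟩
    rw [Sym2.isDiag_map old_injective]
    exact G.not_isDiag_of_mem_edgeSet he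
  rw [attachFourCycle, SimpleGraph.edgeSet_fromEdgeSet, Set.union_comm, Set.insert_union,
    Set.insert_union, Set.singleton_union, Set.insert_comm s(x₂ d, old j)]
  refine sdiff_eq_left.2 (Set.disjoint_left.2 ?_)
  rintro e (rfl | rfl | rfl | he)
  · exact old_ne_x₁ i
  · exact x₁_ne_x₂
  · exact (old_ne_x₂ j).symm
  · exact hdiag e he

theorem adj_old_old : (attachFourCycle G i j).Adj (old u) (old v) ↔ G.Adj u v := by
  have hmap : s(old u, old v) ∈ Sym2.map old '' G.edgeSet ↔ G.Adj u v :=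
    (Sym2.map.injective old_injective).mem_set_image (a := s(u, v))
  rw [← SimpleGraph.mem_edgeSet, edgeSet_eq]
  simp [hmap, old_ne_x₁, old_ne_x₂]

theorem eq_of_adj_old_x₁ (h : (attachFourCycle G i j).Adj (old u) (x₁ d)) : u = i := by
  rw [← SimpleGraph.mem_edgeSet, edgeSet_eq] at h
  simpa [Sym2.exists, old_ne_x₁, old_ne_x₂, x₁_ne_x₂, old_injective.eq_iff] using h

theorem eq_of_adj_old_x₂ (h : (attachFourCycle G i j).Adj (old u) (x₂ d)) : u = j := by
  rw [← SimpleGraph.mem_edgeSet, edgeSet_eq] at h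
  simpa [Sym2.exists, old_ne_x₁, old_ne_x₂, x₁_ne_x₂.symm, old_injective.eq_iff] using h

/-- `G` as an induced subgraph of `attachFourCycle G i j`. -/
def embedding (G : SimpleGraph (Fin d)) (i j : Fin d) : G ↪g attachFourCycle G i j where
  toFun := old
  inj' := old_injective
  map_rel_iff' := adj_old_old

/-- The coefficient vector of the functional `x₁ - x₂`, which is positive on the edge at `x₁`,
negative on the edge at `x₂` and zero on all other edges, `{x₁, x₂}` included. -/
def separator (d : ℕ) : Fin (d + 2) → ℝ := Pi.single (x₁ d) 1 - Pi.single (x₂ d) 1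

@[simp] theorem separator_old : separator d (old u) = 0 := by
  simp [separator, old_ne_x₁, old_ne_x₂]

@[simp] theorem separator_x₁ : separator d (x₁ d) = 1 := by
  simp [separator, x₁_ne_x₂]

@[simp] theorem separator_x₂ : separator d (x₂ d) = -1 := by
  simp [separator, x₁_ne_x₂.symm]

theorem isSepHyperplane_separator (hij : G.Adj i j) :
    IsSepHyperplane (attachFourCycle G i j) (separator d) 0 := by
  refine isSepHyperplane_of_edgeSet_eq edgeSet_eq ?_ (by simp [dotProduct_rho]) ?_
  · rintro _ (rfl | ⟨e, -, rfl⟩)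
    · simp [dotProduct_rho]
    · induction e with
      | _ u v => simp [dotProduct_rho]
  · have hmid : midpoint ℝ (rho s(old i, x₁ d)) (rho s(x₂ d, old j)) =
        midpoint ℝ (rho s(x₁ d, x₂ d)) (rho s(old i, old j)) := by
      simp only [midpoint_eq_smul_add, rho, Sym2.lift_mk]
      congr 1
      abel
    refine ⟨_, midpoint_mem_openSegment .., ?_⟩
    rw [hmid]
    exact (convex_convexHull ℝ _).midpoint_mem
      (subset_convexHull ℝ _ (Set.mem_image_of_mem _ (Set.mem_insert _ _)))
      (subset_convexHull ℝ _ (Set.mem_image_of_mem _ (Set.mem_insert_of_mem _ ⟨s(i, j), hij, rfl⟩)))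

end attachFourCycle

open attachFourCycle

variable {d : ℕ} {G : SimpleGraph (Fin d)} {i j u v : Fin d}

theorem typeIIDecomposable_attachFourCycle (hij : G.Adj i j) :
    TypeIIDecomposable (attachFourCycle G i j) := by
  refine ⟨separator d, fun k ↦ ?_, ⟨old i, separator_old⟩, fun k l hkl ↦ ?_,
    isSepHyperplane_separator hij⟩
  · rcases eq_old_or_eq_x₁_or_eq_x₂ k with ⟨u, rfl⟩ | rfl | rfl <;> simp
  · have hone : (1 : ℝ) ≠ -1 := by norm_num
    rcases eq_old_or_eq_x₁_or_eq_x₂ k with ⟨u, rfl⟩ | rfl | rfl <;>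
      rcases eq_old_or_eq_x₁_or_eq_x₂ l with ⟨v, rfl⟩ | rfl | rfl <;>
      simp [hone, hone.symm] at hkl ⊢

theorem isIndepSet_compl_attachFourCycle {A : Set (Fin (d + 2))}
    (hA : MonochromaticEdgesOpposite (attachFourCycle G i j) A)
    (hold : G.IsIndepSet (old ⁻¹' Aᶜ)) (hu : old u ∈ A) (hv : old v ∈ A) (huv : G.Adj u v)
    (hne : s(u, v) ≠ s(i, j)) : (attachFourCycle G i j).IsIndepSet Aᶜ := by
  have hopp {s t} (hs : s ∈ Aᶜ) (ht : t ∈ Aᶜ) :=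
    hA hu hv hs ht (adj_old_old.2 huv)
  suffices hedge : ∀ e ∈ (attachFourCycle G i j).edgeSet, ¬∀ w ∈ e, w ∈ Aᶜ by
    by_contra hind
    obtain ⟨s, hs, t, ht, hst⟩ := not_isIndepSet_iff.1 hind
    exact hedge s(s, t) hst (Sym2.ball.2 ⟨hs, ht⟩)
  intro e he heA
  have he' := he
  rw [edgeSet_eq] at he'
  rcases he' with rfl | rfl | rfl | ⟨e, he', rfl⟩
  · have hi : old i ∉ A := heA _ (Sym2.mem_mk_left ..)
    rcases hopp hi (heA _ (Sym2.mem_mk_right ..)) he with ⟨-, h⟩ | ⟨h, -⟩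
    · exact hi (eq_of_adj_old_x₁ h ▸ hv)
    · exact hi (eq_of_adj_old_x₁ h ▸ hu)
  · have hj : old j ∉ A := heA _ (Sym2.mem_mk_right ..)
    rcases hopp (heA _ (Sym2.mem_mk_left ..)) hj he with ⟨h, -⟩ | ⟨-, h⟩
    · exact hj (eq_of_adj_old_x₂ h ▸ hu)
    · exact hj (eq_of_adj_old_x₂ h ▸ hv)
  · rcases hopp (heA _ (Sym2.mem_mk_left ..)) (heA _ (Sym2.mem_mk_right ..)) he with
      ⟨h₁, h₂⟩ | ⟨h₂, h₁⟩
    · exact hne (by rw [eq_of_adj_old_x₁ h₁, eq_of_adj_old_x₂ h₂])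
    · exact hne (by rw [eq_of_adj_old_x₁ h₁, eq_of_adj_old_x₂ h₂, Sym2.eq_swap])
  · induction e with
    | _ s t =>
      exact not_isIndepSet_iff.2
        ⟨s, heA _ (Sym2.mem_mk_left ..), t, heA _ (Sym2.mem_mk_right ..), he'⟩ hold

end AttachFourCycle

section TriPan

theorem inter_nontrivial_iff_not_inter_compl_nontrivial {α : Type*} {S A : Set α}
    (hS : S.ncard = 3) : (S ∩ A).Nontrivial ↔ ¬(S ∩ Aᶜ).Nontrivial := by
  have : Finite S := Set.finite_of_ncard_ne_zero (by omega)
  have hcard := Set.ncard_inter_add_ncard_sdiff_eq_ncard S A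
  rw [← Set.one_lt_ncard_iff_nontrivial, ← Set.one_lt_ncard_iff_nontrivial, ← Set.sdiff_eq]
  omega

namespace triPan

variable {n : ℕ}

/-- The vertex `x` of the tri-pan. -/
def apex (n : ℕ) : Fin (2 * n + 2) := ⟨0, by omega⟩

/-- The vertex `v_{k+1}` of the tri-pan. -/
def v (k : Fin n) : Fin (2 * n + 2) := ⟨k + 1, by omega⟩

/-- The vertex `y_k` of the tri-pan. -/
def y (k : Fin (n + 1)) : Fin (2 * n + 2) := ⟨n + 1 + k, by omega⟩

/-- The vertices of the triangle of the tri-pan that contains `v_{k+1}`. -/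
def triangle (k : Fin n) : Set (Fin (2 * n + 2)) := {v k, y k.castSucc, y k.succ}

theorem mem_triangle_iff_val {k : Fin n} {u : Fin (2 * n + 2)} :
    u ∈ triangle k ↔ (u : ℕ) = k + 1 ∨ (u : ℕ) = n + 1 + k ∨ (u : ℕ) = n + 1 + (k + 1) := by
  simp [triangle, v, y, Fin.ext_iff]

theorem adj_iff {u w : Fin (2 * n + 2)} : (triPan n).Adj u w ↔
    u ≠ w ∧ ∃ k, s(u, w) = s(apex n, v k) ∨ (u ∈ triangle k ∧ w ∈ triangle k) := by
  rw [triPan, SimpleGraph.fromEdgeSet_adj, and_comm]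
  refine and_congr_right fun _ ↦ ?_
  simp only [Set.mem_ofPred, Sym2.eq_iff, Fin.exists_iff, mem_triangle_iff_val, Fin.ext_iff, apex,
    v]
  constructor
  · rintro ⟨k, hk₁, hkn, h⟩
    exact ⟨k - 1, by omega, by omega⟩
  · rintro ⟨k, hkn, h⟩
    exact ⟨k + 1, by omega, by omega, by omega⟩

theorem ncard_triangle (k : Fin n) : (triangle k).ncard = 3 := by
  refine Set.ncard_eq_three.2 ⟨_, _, _, ?_, ?_, ?_, rfl⟩ <;>
    simp only [v, y, ne_eq, Fin.ext_iff, Fin.val_castSucc, Fin.val_succ] <;> omega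

theorem triangle_inter_subsingleton {k l : Fin n} (hkl : k ≠ l) :
    (triangle k ∩ triangle l).Subsingleton := by
  rintro u ⟨huk, hul⟩ w ⟨hwk, hwl⟩
  rw [ne_eq, Fin.ext_iff] at hkl
  rw [mem_triangle_iff_val] at huk hul hwk hwl
  omega

theorem adj_of_mem_triangle {k : Fin n} {u w : Fin (2 * n + 2)} (hu : u ∈ triangle k)
    (hw : w ∈ triangle k) (huw : u ≠ w) : (triPan n).Adj u w :=
  adj_iff.2 ⟨huw, k, Or.inr ⟨hu, hw⟩⟩

theorem eq_v_of_adj_apex {k : Fin n} {u : Fin (2 * n + 2)} (hu : u ∈ triangle k)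
    (h : (triPan n).Adj u (apex n)) : u = v k := by
  obtain ⟨-, l, h⟩ := adj_iff.1 h
  simp only [Sym2.eq_iff, mem_triangle_iff_val, Fin.ext_iff, apex, v] at h hu ⊢
  omega

theorem eq_y_or_eq_y_of_adj {k l : Fin n} (hkl : k < l) {u s : Fin (2 * n + 2)}
    (hu : u ∈ triangle k) (hs : s ∈ triangle l) (h : (triPan n).Adj u s) :
    u = y k.succ ∨ s = y k.succ := by
  obtain ⟨-, m, h⟩ := adj_iff.1 h
  simp only [Sym2.eq_iff, mem_triangle_iff_val, Fin.ext_iff, apex, v, y, Fin.val_succ,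
    Fin.lt_def] at h hu hs hkl ⊢
  omega

end triPan

open triPan

variable {n : ℕ} {A : Set (Fin (2 * n + 2))}

theorem MonochromaticEdgesOpposite.not_nontrivial_and_nontrivial
    (hA : MonochromaticEdgesOpposite (triPan n) A) {k l : Fin n} (hkl : k < l) :
    ¬((triangle k ∩ A).Nontrivial ∧ (triangle l ∩ Aᶜ).Nontrivial) := by
  rintro ⟨⟨u, ⟨huk, hu⟩, w, ⟨hwk, hw⟩, huw⟩, ⟨s, ⟨hsl, hs⟩, t, ⟨htl, ht⟩, hst⟩⟩
  have hdisj {a b} (ha : a ∈ A) (hb : b ∈ Aᶜ) : a ≠ b := by rintro rfl; exact hb ha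
  rcases hA hu hw hs ht (adj_of_mem_triangle huk hwk huw) (adj_of_mem_triangle hsl htl hst) with
    ⟨h, h'⟩ | ⟨h, h'⟩
  · have := eq_y_or_eq_y_of_adj hkl huk hsl h
    have := eq_y_or_eq_y_of_adj hkl hwk htl h'
    grind
  · have := eq_y_or_eq_y_of_adj hkl huk htl h
    have := eq_y_or_eq_y_of_adj hkl hwk hsl h'
    grind

theorem MonochromaticEdgesOpposite.triangle_inter_nontrivial
    (hA : MonochromaticEdgesOpposite (triPan n) A) {k : Fin n}
    (hk : (triangle k ∩ A).Nontrivial) (l : Fin n) : (triangle l ∩ A).Nontrivial := by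
  by_contra hl
  have hl' : (triangle l ∩ Aᶜ).Nontrivial :=
    not_not.1 (mt (inter_nontrivial_iff_not_inter_compl_nontrivial (ncard_triangle l)).2 hl)
  rcases lt_trichotomy k l with hkl | rfl | hlk
  · exact hA.not_nontrivial_and_nontrivial hkl ⟨hk, hl'⟩
  · exact hl hk
  · exact hA.compl.not_nontrivial_and_nontrivial hlk ⟨hl', by rwa [compl_compl]⟩

theorem MonochromaticEdgesOpposite.isIndepSet_compl_triPan
    (hA : MonochromaticEdgesOpposite (triPan n) A) (h : ∀ k, (triangle k ∩ A).Nontrivial) :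
    (triPan n).IsIndepSet Aᶜ := by
  intro s hs t ht hst hadj
  obtain ⟨-, k, hk | ⟨hsk, htk⟩⟩ := adj_iff.1 hadj
  · obtain ⟨hx, hvk⟩ : apex n ∈ Aᶜ ∧ v k ∈ Aᶜ := by
      rw [← Sym2.ball, ← hk]
      exact Sym2.ball.2 ⟨hs, ht⟩
    rw [← SimpleGraph.mem_edgeSet, hk] at hadj
    obtain ⟨u, ⟨huk, hu⟩, w, ⟨hwk, hw⟩, huw⟩ := h k
    rcases hA hu hw hx hvk (adj_of_mem_triangle huk hwk huw) hadj with ⟨hux, -⟩ | ⟨-, hwx⟩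
    · exact hvk (eq_v_of_adj_apex huk hux ▸ hu)
    · exact hvk (eq_v_of_adj_apex hwk hwx ▸ hw)
  · exact (inter_nontrivial_iff_not_inter_compl_nontrivial (ncard_triangle k)).1 (h k)
      ⟨s, ⟨hsk, hs⟩, t, ⟨htk, ht⟩, hst⟩

theorem exists_triPan_adj_ne (hn : 2 ≤ n) (h : ∀ k, (triangle k ∩ A).Nontrivial)
    (e : Sym2 (Fin (2 * n + 2))) : ∃ u ∈ A, ∃ w ∈ A, (triPan n).Adj u w ∧ s(u, w) ≠ e := by
  by_contra! hall
  have hedge {k} : ∃ u ∈ triangle k, ∃ w ∈ triangle k, u ≠ w ∧ s(u, w) = e := by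
    obtain ⟨u, ⟨huk, hu⟩, w, ⟨hwk, hw⟩, huw⟩ := h k
    exact ⟨u, huk, w, hwk, huw, hall u hu w hw (adj_of_mem_triangle huk hwk huw)⟩
  obtain ⟨u, hu, w, hw, huw, rfl⟩ := hedge (k := ⟨0, by omega⟩)
  obtain ⟨u', hu', w', hw', -, heq⟩ := hedge (k := ⟨1, by omega⟩)
  obtain ⟨hu₁, hw₁⟩ : u ∈ triangle ⟨1, by omega⟩ ∧ w ∈ triangle ⟨1, by omega⟩ := by
    rw [← Sym2.ball, ← heq]
    exact Sym2.ball.2 ⟨hu', hw'⟩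
  exact huw (triangle_inter_subsingleton (by simp) ⟨hu, hu₁⟩ ⟨hw, hw₁⟩)

end TriPan

section AttachFourCycleTriPan

open attachFourCycle triPan

variable {n : ℕ} {i j : Fin (2 * n + 2)}

theorem MonochromaticEdgesOpposite.isIndepSet_compl_and_not_isIndepSet (hn : 2 ≤ n)
    {A : Set (Fin (2 * n + 2 + 2))}
    (hA : MonochromaticEdgesOpposite (attachFourCycle (triPan n) i j) A) {k : Fin n}
    (hk : (triangle k ∩ old ⁻¹' A).Nontrivial) :
    (attachFourCycle (triPan n) i j).IsIndepSet Aᶜ ∧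
      ¬(attachFourCycle (triPan n) i j).IsIndepSet A := by
  have hold : MonochromaticEdgesOpposite (triPan n) (old ⁻¹' A) :=
    hA.preimage (embedding (triPan n) i j)
  have htri := hold.triangle_inter_nontrivial hk
  obtain ⟨u, hu, w, hw, huw, hne⟩ := exists_triPan_adj_ne hn htri s(i, j)
  exact ⟨isIndepSet_compl_attachFourCycle hA (hold.isIndepSet_compl_triPan htri) hu hw huw hne,
    not_isIndepSet_iff.2 ⟨_, hu, _, hw, adj_old_old.2 huw⟩⟩

theorem not_typeIDecomposable_attachFourCycle_triPan (hn : 2 ≤ n) (i j : Fin (2 * n + 2)) :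
    ¬TypeIDecomposable (attachFourCycle (triPan n) i j) := by
  intro h
  obtain ⟨A, hA, hind⟩ := h.exists_monochromaticEdgesOpposite
  by_cases hmaj : (triangle ⟨0, by omega⟩ ∩ old ⁻¹' A).Nontrivial
  · obtain ⟨hcompl, hself⟩ := hA.isIndepSet_compl_and_not_isIndepSet hn hmaj
    exact hself (hind.2 hcompl)
  · rw [inter_nontrivial_iff_not_inter_compl_nontrivial (ncard_triangle _), not_not] at hmaj
    obtain ⟨hself, hcompl⟩ := hA.compl.isIndepSet_compl_and_not_isIndepSet hn hmaj
    exact hcompl (hind.1 (by rwa [compl_compl] at hself))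

end AttachFourCycleTriPan

/-- For `n ≥ 2`, attaching a 4-cycle to the `n`-joined tri-pan `T(n)` at an
arbitrary edge `{i,j}` of `T(n)` yields a graph whose edge polytope is type II decomposable
but not type I decomposable. -/
theorem attachFourCycle_triPan_typeII_not_typeI (n : ℕ) (hn : 2 ≤ n)
    (i j : Fin (2 * n + 2)) (hij : (triPan n).Adj i j) :
    TypeIIDecomposable (attachFourCycle (triPan n) i j) ∧
      ¬ TypeIDecomposable (attachFourCycle (triPan n) i j) := by
  exact ⟨typeIIDecomposable_attachFourCycle hij,
    not_typeIDecomposable_attachFourCycle_triPan hn i j⟩
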